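/- arXiv:2507.20877 — 2 statements merged into one kernel-verified Lean document; each statement's English description precedes it below -/
import Mathlib

section
/- Let f : (0,∞) → ℝ be a nonnegative, monotone decreasing function and let L > 0, κ > 0. Then the sum of f(|p|) over lattice points p ∈ (2π/L)ℤ³ with |p| ≥ κ is bounded above by (L/(2π))³ ∫_{|p| ≥ max(κ − √3·(2π/L), 0)} f(|p|)(1 + 3π/(L|p|) + 6π/(L²|p|²)) dp. -/
open MeasureTheory Real ENNReal

/-- The lattice point of `(2π/L)ℤ³` corresponding to `p ∈ ℤ³`, viewed in `ℝ³`. -/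
noncomputable def latticePoint (L : ℝ) (p : Fin 3 → ℤ) : EuclideanSpace ℝ (Fin 3) :=
  (WithLp.equiv 2 (Fin 3 → ℝ)).symm (fun i => (2 * Real.pi / L) * (p i : ℝ))

/-! For a lattice point `p` without vanishing coordinates, the adjacent lattice cell on the side of
the origin has volume `aⁿ`, and the norms of its points lie between `|p| - √n * a` and `|p|`. These
cells are disjoint, so an integral over `ℝⁿ` controls this part of the sum. The lattice points whose
nonzero coordinates form a proper subset `S` are treated in the same way in `ℝ^S`, and polar
coordinates turn the integral over `ℝ^S` into one over `ℝⁿ` with the extra factor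
`σ_{|S|} / σ_n * |x| ^ (|S| - n)`, where `σ_d` is the area of the unit sphere of `ℝᵈ`. For `n = 3`
and `a = 2π/L`, these factors, scaled by `a ^ (n - |S|)`, add up to
`1 + 3π/(L|x|) + 6π/(L²|x|²)`. -/

section PolarCoordinates

theorem lintegral_fun_norm_eq_toSphere_mul {E : Type*} [NormedAddCommGroup E] [NormedSpace ℝ E]
    [FiniteDimensional ℝ E] [Nontrivial E] [MeasurableSpace E] [BorelSpace E] (μ : Measure E)
    [μ.IsAddHaarMeasure] {F : ℝ → ℝ≥0∞} (hF : Measurable F) :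
    ∫⁻ x, F ‖x‖ ∂μ = μ.toSphere Set.univ *
      ∫⁻ r in Set.Ioi (0 : ℝ), ENNReal.ofReal (r ^ (Module.finrank ℝ E - 1)) * F r := by
  have hF' : Measurable fun r : Set.Ioi (0 : ℝ) => F r := hF.comp measurable_subtype_coe
  calc
    ∫⁻ x, F ‖x‖ ∂μ = ∫⁻ x : ({0}ᶜ : Set E), F ‖x.1‖ ∂(μ.comap (↑)) := by
      rw [lintegral_subtype_comap (measurableSet_singleton _).compl fun x => F ‖x‖,
        restrict_compl_singleton]
    _ = ∫⁻ x, F x.2 ∂μ.toSphere.prod (.volumeIoiPow (Module.finrank ℝ E - 1)) := by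
      simpa using μ.measurePreserving_homeomorphUnitSphereProd.lintegral_comp_emb
        (Homeomorph.measurableEmbedding _) (F ∘ Subtype.val ∘ Prod.snd)
    _ = μ.toSphere Set.univ *
        ∫⁻ r : Set.Ioi (0 : ℝ), F r ∂.volumeIoiPow (Module.finrank ℝ E - 1) := by
      rw [lintegral_prod _ (by fun_prop)]
      simp only [lintegral_const, mul_comm]
    _ = _ := by
      rw [Measure.volumeIoiPow, lintegral_withDensity_eq_lintegral_mul _ (by fun_prop) hF']
      congr 1
      exact lintegral_subtype_comap measurableSet_Ioi
        fun r => ENNReal.ofReal (r ^ (Module.finrank ℝ E - 1)) * F r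

/-- The surface area `σ_d` of the unit sphere of `ℝᵈ`. -/
noncomputable def unitSphereArea (d : ℕ) : ℝ :=
  (volume : Measure (EuclideanSpace ℝ (Fin d))).toSphere.real Set.univ

theorem unitSphereArea_eq_mul_volume_ball (d : ℕ) :
    unitSphereArea d = d * volume.real (Metric.ball (0 : EuclideanSpace ℝ (Fin d)) 1) := by
  rw [unitSphereArea, Measure.toSphere_real_apply_univ, finrank_euclideanSpace_fin]

theorem unitSphereArea_nonneg (d : ℕ) : 0 ≤ unitSphereArea d :=
  measureReal_nonneg

theorem unitSphereArea_pos {d : ℕ} (hd : d ≠ 0) : 0 < unitSphereArea d := by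
  rw [unitSphereArea_eq_mul_volume_ball, measureReal_def]
  have hball := Metric.measure_ball_pos volume (0 : EuclideanSpace ℝ (Fin d)) one_pos
  exact mul_pos (by positivity) (ENNReal.toReal_pos hball.ne' measure_ball_lt_top.ne)

theorem unitSphereArea_zero : unitSphereArea 0 = 0 := by
  simp [unitSphereArea_eq_mul_volume_ball]

theorem unitSphereArea_one : unitSphereArea 1 = 2 := by
  have hGamma : Gamma ((1 : ℕ) / 2 + 1) = √π / 2 := by
    rw [Nat.cast_one, Gamma_add_one (by norm_num), Gamma_one_half_eq]
    ring
  have hπ : √π ≠ 0 := (Real.sqrt_pos.2 pi_pos).ne'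
  rw [unitSphereArea_eq_mul_volume_ball, measureReal_def, EuclideanSpace.volume_ball,
    Fintype.card_fin, hGamma, pow_one, pow_one,
    div_div_cancel₀ hπ]
  simp

theorem unitSphereArea_two : unitSphereArea 2 = 2 * π := by
  simp [unitSphereArea_eq_mul_volume_ball, measureReal_def, pi_nonneg]

theorem unitSphereArea_three : unitSphereArea 3 = 4 * π := by
  rw [unitSphereArea_eq_mul_volume_ball, measureReal_def, EuclideanSpace.volume_ball_fin_three,
    ← ENNReal.ofReal_pow zero_le_one, ← ENNReal.ofReal_mul (by positivity),
    ENNReal.toReal_ofReal (by positivity)]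
  ring

theorem unitSphereArea_mul_pow_mul_div_pow {d n : ℕ} (hd : d ≠ 0) (hdn : d ≤ n) (a : ℝ) {r : ℝ}
    (hr : r ≠ 0) :
    unitSphereArea n * (r ^ (n - 1) * (unitSphereArea d / unitSphereArea n * (a / r) ^ (n - d))) =
      a ^ (n - d) * (unitSphereArea d * r ^ (d - 1)) := by
  have hn : unitSphereArea n ≠ 0 := (unitSphereArea_pos (by omega)).ne'
  have hpow : n - 1 = d - 1 + (n - d) := by omega
  rw [hpow, pow_add, div_pow]
  field_simp

variable {ι κ : Type*} [Fintype ι] [Fintype κ] [Nonempty ι] [Nonempty κ]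

theorem toSphere_univ_euclideanSpace :
    (volume : Measure (EuclideanSpace ℝ ι)).toSphere Set.univ =
      ENNReal.ofReal (unitSphereArea (Fintype.card ι)) := by
  have : Nonempty (Fin (Fintype.card ι)) := Fin.pos_iff_nonempty.1 Fintype.card_pos
  rw [unitSphereArea, ofReal_measureReal, Measure.toSphere_apply_univ, Measure.toSphere_apply_univ,
    EuclideanSpace.volume_ball, EuclideanSpace.volume_ball, finrank_euclideanSpace,
    finrank_euclideanSpace, Fintype.card_fin]

theorem lintegral_fun_norm_euclideanSpace {F : ℝ → ℝ≥0∞} (hF : Measurable F) :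
    ∫⁻ x : EuclideanSpace ℝ ι, F ‖x‖ = ENNReal.ofReal (unitSphereArea (Fintype.card ι)) *
      ∫⁻ r in Set.Ioi (0 : ℝ), ENNReal.ofReal (r ^ (Fintype.card ι - 1)) * F r := by
  rw [lintegral_fun_norm_eq_toSphere_mul _ hF, toSphere_univ_euclideanSpace,
    finrank_euclideanSpace]

theorem lintegral_fun_norm_mul_div_pow {F : ℝ → ℝ≥0∞} (hF : Measurable F)
    (hcard : Fintype.card κ ≤ Fintype.card ι) {a : ℝ} (ha : 0 ≤ a) :
    ∫⁻ x : EuclideanSpace ℝ ι, F ‖x‖ *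
        ENNReal.ofReal (unitSphereArea (Fintype.card κ) / unitSphereArea (Fintype.card ι) *
          (a / ‖x‖) ^ (Fintype.card ι - Fintype.card κ)) =
      ENNReal.ofReal (a ^ (Fintype.card ι - Fintype.card κ)) *
        ∫⁻ y : EuclideanSpace ℝ κ, F ‖y‖ := by
  let w (r : ℝ) : ℝ := unitSphereArea (Fintype.card κ) / unitSphereArea (Fintype.card ι) *
    (a / r) ^ (Fintype.card ι - Fintype.card κ)
  have hw : Measurable fun r => ENNReal.ofReal (w r) := by fun_prop
  have hintegrand (r : ℝ) (hr : 0 < r) : ENNReal.ofReal (unitSphereArea (Fintype.card ι)) *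
      (ENNReal.ofReal (r ^ (Fintype.card ι - 1)) * (F r * ENNReal.ofReal (w r))) =
        ENNReal.ofReal (a ^ (Fintype.card ι - Fintype.card κ)) *
          (ENNReal.ofReal (unitSphereArea (Fintype.card κ)) *
            (ENNReal.ofReal (r ^ (Fintype.card κ - 1)) * F r)) := by
    have hdensity := congrArg ENNReal.ofReal <|
      unitSphereArea_mul_pow_mul_div_pow Fintype.card_ne_zero hcard a hr.ne'
    simp only [ENNReal.ofReal_mul, unitSphereArea_nonneg, pow_nonneg, hr.le, ha] at hdensity
    rw [mul_left_comm _ (F r), mul_left_comm _ (F r), hdensity]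
    ring
  calc
    _ = ENNReal.ofReal (unitSphereArea (Fintype.card ι)) * ∫⁻ r in Set.Ioi (0 : ℝ),
          ENNReal.ofReal (r ^ (Fintype.card ι - 1)) * (F r * ENNReal.ofReal (w r)) :=
      lintegral_fun_norm_euclideanSpace (hF.mul hw)
    _ = ENNReal.ofReal (a ^ (Fintype.card ι - Fintype.card κ)) *
          (ENNReal.ofReal (unitSphereArea (Fintype.card κ)) * ∫⁻ r in Set.Ioi (0 : ℝ),
            ENNReal.ofReal (r ^ (Fintype.card κ - 1)) * F r) := by
      simp only [← lintegral_const_mul' _ _ ENNReal.ofReal_ne_top]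
      exact setLIntegral_congr_fun measurableSet_Ioi hintegrand
    _ = _ := by rw [lintegral_fun_norm_euclideanSpace hF]

end PolarCoordinates

section OutwardRounding

/-- Rounding away from the origin: `t` goes to the endpoint of larger absolute value of the unit
interval `[n, n + 1)` that contains it. The value is never `0`. -/
noncomputable def outwardRound (t : ℝ) : ℤ :=
  if 0 ≤ t then ⌊t⌋ + 1 else ⌊t⌋

theorem measurable_outwardRound : Measurable outwardRound :=
  Measurable.ite measurableSet_Ici (Int.measurable_floor.add_const 1) Int.measurable_floor

theorem abs_le_abs_outwardRound (t : ℝ) : |t| ≤ |(outwardRound t : ℝ)| := by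
  have hlow := Int.floor_le t
  have hup := Int.lt_floor_add_one t
  unfold outwardRound
  split_ifs with ht
  · rw [abs_of_nonneg ht]
    push_cast
    exact hup.le.trans (le_abs_self _)
  · rw [abs_of_neg (not_le.1 ht)]
    exact (neg_le_neg hlow).trans (neg_le_abs _)

theorem abs_outwardRound_sub_le_one (t : ℝ) : |outwardRound t - t| ≤ 1 := by
  have hlow := Int.floor_le t
  have hup := Int.lt_floor_add_one t
  unfold outwardRound
  split_ifs <;> push_cast <;> exact abs_le.2 ⟨by linarith, by linarith⟩

theorem outwardRound_eq_iff_of_pos {n : ℤ} (hn : 0 < n) {t : ℝ} :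
    outwardRound t = n ↔ t ∈ Set.Ico (n - 1 : ℝ) n := by
  have hn' : (1 : ℝ) ≤ n := by exact_mod_cast hn
  unfold outwardRound
  split_ifs with ht
  · rw [← eq_sub_iff_add_eq, Int.floor_eq_iff, Set.mem_Ico]
    push_cast
    rw [sub_add_cancel]
  · rw [Int.floor_eq_iff]
    exact iff_of_false (fun h => by linarith [h.1]) fun h => by linarith [h.1]

theorem outwardRound_eq_iff_of_neg {n : ℤ} (hn : n < 0) {t : ℝ} :
    outwardRound t = n ↔ t ∈ Set.Ico (n : ℝ) (n + 1) := by
  have hn' : (n : ℝ) + 1 ≤ 0 := by exact_mod_cast hn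
  unfold outwardRound
  split_ifs with ht
  · have hfloor : 0 ≤ ⌊t⌋ := Int.floor_nonneg.2 ht
    exact iff_of_false (by omega) fun h => by linarith [h.2]
  · rw [Int.floor_eq_iff, Set.mem_Ico]

theorem volume_outwardRound_preimage_singleton {n : ℤ} (hn : n ≠ 0) :
    volume (outwardRound ⁻¹' {n}) = 1 := by
  rcases lt_or_gt_of_ne hn with hneg | hpos
  · have : outwardRound ⁻¹' {n} = Set.Ico (n : ℝ) (n + 1) :=
      Set.ext fun _ => outwardRound_eq_iff_of_neg hneg
    simp [this]
  · have : outwardRound ⁻¹' {n} = Set.Ico (n - 1 : ℝ) n :=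
      Set.ext fun _ => outwardRound_eq_iff_of_pos hpos
    simp [this]

variable {ι : Type*}

/-- The point of `(aℤ)^ι` with integer coordinates `k`. -/
noncomputable def scaledIntPoint (a : ℝ) (k : ι → ℤ) : EuclideanSpace ℝ ι :=
  WithLp.toLp 2 fun i => a * (k i : ℝ)

/-- Coordinatewise rounding away from the origin in the lattice `(aℤ)^ι`. The fibre over a lattice
point with nonzero coordinates is the adjacent cell on the side of the origin. -/
noncomputable def outwardLatticeRound (a : ℝ) (x : EuclideanSpace ℝ ι) : ι → ℤ :=
  fun i => outwardRound (x i / a)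

theorem measurable_outwardLatticeRound (a : ℝ) :
    Measurable (outwardLatticeRound (ι := ι) a) :=
  measurable_pi_lambda _ fun i => measurable_outwardRound.comp (by fun_prop)

variable [Fintype ι]

theorem volume_outwardLatticeRound_preimage_singleton {a : ℝ} (ha : 0 < a) {k : ι → ℤ}
    (hk : ∀ i, k i ≠ 0) :
    volume (outwardLatticeRound a ⁻¹' {k}) = ENNReal.ofReal a ^ Fintype.card ι := by
  have hpre : outwardLatticeRound a ⁻¹' {k} = WithLp.ofLp ⁻¹'
      (Set.univ.pi fun i => (· * a⁻¹) ⁻¹' (outwardRound ⁻¹' {k i})) := by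
    ext x
    simp [outwardLatticeRound, funext_iff, div_eq_mul_inv]
  have hmeas : MeasurableSet
      (Set.univ.pi fun i => (· * a⁻¹) ⁻¹' (outwardRound ⁻¹' {k i})) :=
    MeasurableSet.univ_pi fun i => (measurable_outwardRound.comp (measurable_mul_const _))
      (measurableSet_singleton _)
  rw [hpre, (PiLp.volume_preserving_ofLp ι).measure_preimage hmeas.nullMeasurableSet,
    volume_pi_pi]
  simp [Real.volume_preimage_mul_right, ha.ne', abs_of_pos ha,
    volume_outwardRound_preimage_singleton (hk _)]

theorem norm_le_norm_scaledIntPoint_outwardLatticeRound {a : ℝ} (ha : a ≠ 0)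
    (x : EuclideanSpace ℝ ι) : ‖x‖ ≤ ‖scaledIntPoint a (outwardLatticeRound a x)‖ := by
  rw [EuclideanSpace.norm_eq, EuclideanSpace.norm_eq]
  gcongr with i _
  calc ‖x i‖ = |a| * |x i / a| := by rw [← abs_mul, mul_div_cancel₀ _ ha, norm_eq_abs]
    _ ≤ |a| * |(outwardRound (x i / a) : ℝ)| :=
      mul_le_mul_of_nonneg_left (abs_le_abs_outwardRound _) (abs_nonneg a)
    _ = _ := (abs_mul _ _).symm

theorem norm_scaledIntPoint_outwardLatticeRound_le {a : ℝ} (ha : 0 < a)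
    (x : EuclideanSpace ℝ ι) :
    ‖scaledIntPoint a (outwardLatticeRound a x)‖ ≤ ‖x‖ + √(Fintype.card ι) * a := by
  have hcoord (i : ι) : ‖(scaledIntPoint a (outwardLatticeRound a x) - x) i‖ ≤ a := by
    have hscale : (scaledIntPoint a (outwardLatticeRound a x) - x) i =
        a * (outwardRound (x i / a) - x i / a) := by
      rw [mul_sub, mul_div_cancel₀ _ ha.ne']
      rfl
    rw [hscale, norm_mul, norm_of_nonneg ha.le]
    exact mul_le_of_le_one_right ha.le (abs_outwardRound_sub_le_one _)
  have hdist : ‖scaledIntPoint a (outwardLatticeRound a x) - x‖ ≤ √(Fintype.card ι) * a := by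
    rw [EuclideanSpace.norm_eq, Real.sqrt_le_left (by positivity), mul_pow,
      Real.sq_sqrt (Nat.cast_nonneg _), ← nsmul_eq_mul]
    exact Finset.sum_le_card_nsmul _ _ _ fun i _ => pow_le_pow_left₀ (norm_nonneg _) (hcoord i) 2
  linarith [norm_le_norm_add_norm_sub' (scaledIntPoint a (outwardLatticeRound a x)) x]

end OutwardRounding

section LatticeSums

variable {ι κ : Type*} [Fintype ι] [Fintype κ] {a : ℝ} {G H : ℝ → ℝ≥0∞}

theorem tsum_nonzero_coords_le_lintegral (ha : 0 < a)
    (hGH : ∀ r s, 0 ≤ r → r ≤ s → s ≤ r + √(Fintype.card κ) * a → G s ≤ H r) :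
    (∑' q : {q : κ → ℤ // ∀ i, q i ≠ 0}, G ‖scaledIntPoint a q.1‖) *
      ENNReal.ofReal a ^ Fintype.card κ ≤ ∫⁻ y : EuclideanSpace ℝ κ, H ‖y‖ := by
  have hround := measurable_outwardLatticeRound (ι := κ) a
  let cellVolume (k : κ → ℤ) : ℝ≥0∞ := volume (outwardLatticeRound a ⁻¹' {k})
  calc
    _ = ∑' q : {q : κ → ℤ // ∀ i, q i ≠ 0}, G ‖scaledIntPoint a q.1‖ * cellVolume q := by
      rw [← ENNReal.tsum_mul_right]
      exact tsum_congr fun q => by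
        rw [← volume_outwardLatticeRound_preimage_singleton ha q.2]
    _ ≤ ∑' k, G ‖scaledIntPoint a k‖ * cellVolume k :=
      ENNReal.tsum_comp_le_tsum_of_injective Subtype.val_injective
        fun k => G ‖scaledIntPoint a k‖ * cellVolume k
    _ = ∫⁻ k, G ‖scaledIntPoint a k‖ ∂(Measure.map (outwardLatticeRound a) volume) := by
      simp only [lintegral_countable', cellVolume,
        Measure.map_apply hround (measurableSet_singleton _)]
    _ = ∫⁻ y, G ‖scaledIntPoint a (outwardLatticeRound a y)‖ :=
      lintegral_map (measurable_of_countable _) hround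
    _ ≤ ∫⁻ y, H ‖y‖ := lintegral_mono fun y => hGH _ _ (norm_nonneg y)
      (norm_le_norm_scaledIntPoint_outwardLatticeRound ha.ne' y)
      (norm_scaledIntPoint_outwardLatticeRound_le ha y)

theorem tsum_nonzero_coords_le_lintegral_of_card_le [Nonempty ι] [Nonempty κ] (ha : 0 < a)
    (hH : Measurable H) (hcard : Fintype.card κ ≤ Fintype.card ι)
    (hGH : ∀ r s, 0 ≤ r → r ≤ s → s ≤ r + √(Fintype.card ι) * a → G s ≤ H r) :
    ∑' q : {q : κ → ℤ // ∀ i, q i ≠ 0}, G ‖scaledIntPoint a q.1‖ ≤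
      ENNReal.ofReal (a⁻¹ ^ Fintype.card ι) * ∫⁻ x : EuclideanSpace ℝ ι, H ‖x‖ *
        ENNReal.ofReal (unitSphereArea (Fintype.card κ) / unitSphereArea (Fintype.card ι) *
          (a / ‖x‖) ^ (Fintype.card ι - Fintype.card κ)) := by
  have hscale : a⁻¹ ^ Fintype.card ι * a ^ (Fintype.card ι - Fintype.card κ) =
      (a ^ Fintype.card κ)⁻¹ := by
    rw [pow_sub₀ _ ha.ne' hcard, inv_pow, inv_mul_cancel_left₀ (pow_pos ha _).ne']
  rw [lintegral_fun_norm_mul_div_pow hH hcard ha.le, ← mul_assoc,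
    ← ENNReal.ofReal_mul (by positivity), hscale, ENNReal.ofReal_inv_of_pos (pow_pos ha _),
    ENNReal.ofReal_pow ha.le, mul_comm, ← div_eq_mul_inv]
  refine (ENNReal.le_div_iff_mul_le (by simp [ha]) (by simp)).2 ?_
  exact tsum_nonzero_coords_le_lintegral ha fun r s hr hrs hs =>
    hGH r s hr hrs (hs.trans (by gcongr))

theorem norm_scaledIntPoint_restrict {S : Finset ι} {p : ι → ℤ} (hp : ∀ i ∉ S, p i = 0) :
    ‖scaledIntPoint a (S.restrict p)‖ = ‖scaledIntPoint a p‖ := by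
  rw [EuclideanSpace.norm_eq, EuclideanSpace.norm_eq,
    ← Finset.sum_subset (Finset.subset_univ S) fun i _ hi => by simp [scaledIntPoint, hp i hi]]
  exact congrArg Real.sqrt (Finset.sum_coe_sort S fun i => ‖scaledIntPoint a p i‖ ^ 2)

theorem tsum_le_sum_tsum_nonzero_coords (a : ℝ) (G : ℝ → ℝ≥0∞) :
    ∑' p : ι → ℤ, G ‖scaledIntPoint a p‖ ≤
      ∑ S : Finset ι, ∑' q : {q : S → ℤ // ∀ i, q i ≠ 0}, G ‖scaledIntPoint a q.1‖ := by
  classical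
  let supp (p : ι → ℤ) : Finset ι := {i | p i ≠ 0}
  rw [← ENNReal.tsum_fiberwise _ supp, tsum_fintype]
  refine Finset.sum_le_sum fun S _ => ?_
  have hsupp (p : supp ⁻¹' {S}) (i : ι) : i ∈ S ↔ p.1 i ≠ 0 := by
    have hp : supp p.1 = S := p.2
    simp [← hp, supp]
  have hzero (p : supp ⁻¹' {S}) (i : ι) (hi : i ∉ S) : p.1 i = 0 :=
    not_not.1 (mt (hsupp p i).2 hi)
  let restrict (p : supp ⁻¹' {S}) : {q : S → ℤ // ∀ i, q i ≠ 0} :=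
    ⟨S.restrict p.1, fun i => (hsupp p i).1 i.2⟩
  have hrestrict : Function.Injective restrict := fun p q hpq => by
    ext i
    by_cases hi : i ∈ S
    · exact congrFun (congrArg Subtype.val hpq) ⟨i, hi⟩
    · rw [hzero p i hi, hzero q i hi]
  calc
    _ = ∑' p, G ‖scaledIntPoint a (restrict p).1‖ :=
      tsum_congr fun p => by rw [norm_scaledIntPoint_restrict (hzero p)]
    _ ≤ _ := ENNReal.tsum_comp_le_tsum_of_injective hrestrict fun q => G ‖scaledIntPoint a q.1‖

/-- The density, relative to Lebesgue measure on `ℝⁿ`, that collects the contributions of all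
coordinate subspaces of `ℝⁿ` to a radial lattice sum of mesh `a`; `t` stands for `a / |x|`. -/
noncomputable def coordSubspaceWeight (n : ℕ) (t : ℝ) : ℝ :=
  ∑ d ∈ Finset.range (n + 1), n.choose d * (unitSphereArea d / unitSphereArea n * t ^ (n - d))

theorem coordSubspaceWeight_card (t : ℝ) :
    coordSubspaceWeight (Fintype.card ι) t = ∑ S : Finset ι,
      unitSphereArea S.card / unitSphereArea (Fintype.card ι) * t ^ (Fintype.card ι - S.card) := by
  rw [← Finset.powerset_univ, Finset.sum_powerset_apply_card fun d =>
    unitSphereArea d / unitSphereArea (Fintype.card ι) * t ^ (Fintype.card ι - d)]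
  simp only [coordSubspaceWeight, Finset.card_univ, nsmul_eq_mul]

theorem coordSubspaceWeight_three (t : ℝ) :
    coordSubspaceWeight 3 t = 1 + 3 / 2 * t + 3 / (2 * π) * t ^ 2 := by
  simp only [coordSubspaceWeight, Finset.sum_range_succ, Finset.range_zero, Finset.sum_empty,
    unitSphereArea_zero, unitSphereArea_one, unitSphereArea_two, unitSphereArea_three]
  simp only [Nat.choose_zero_right, Nat.choose_one_right, Nat.choose_self,
    Nat.choose_succ_self_right]
  push_cast
  field_simp
  ring

theorem tsum_lattice_le_lintegral_mul_coordSubspaceWeight [Nonempty ι] (ha : 0 < a)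
    (hG : G 0 = 0) (hH : Measurable H)
    (hGH : ∀ r s, 0 ≤ r → r ≤ s → s ≤ r + √(Fintype.card ι) * a → G s ≤ H r) :
    ∑' p : ι → ℤ, G ‖scaledIntPoint a p‖ ≤
      ENNReal.ofReal (a⁻¹ ^ Fintype.card ι) * ∫⁻ x : EuclideanSpace ℝ ι,
        H ‖x‖ * ENNReal.ofReal (coordSubspaceWeight (Fintype.card ι) (a / ‖x‖)) := by
  let faceWeight (S : Finset ι) (x : EuclideanSpace ℝ ι) : ℝ :=
    unitSphereArea S.card / unitSphereArea (Fintype.card ι) *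
      (a / ‖x‖) ^ (Fintype.card ι - S.card)
  have hface (S : Finset ι) (x : EuclideanSpace ℝ ι) : 0 ≤ faceWeight S x :=
    mul_nonneg (div_nonneg (unitSphereArea_nonneg _) (unitSphereArea_nonneg _)) (by positivity)
  calc
    _ ≤ ∑ S : Finset ι, ∑' q : {q : S → ℤ // ∀ i, q i ≠ 0}, G ‖scaledIntPoint a q.1‖ :=
      tsum_le_sum_tsum_nonzero_coords a G
    _ ≤ ∑ S : Finset ι, ENNReal.ofReal (a⁻¹ ^ Fintype.card ι) *
          ∫⁻ x : EuclideanSpace ℝ ι, H ‖x‖ * ENNReal.ofReal (faceWeight S x) := by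
      refine Finset.sum_le_sum fun S _ => ?_
      rcases S.eq_empty_or_nonempty with rfl | hS
      · simp [EuclideanSpace.norm_eq, hG]
      · have : Nonempty S := hS.to_subtype
        simpa only [Fintype.card_coe] using
          tsum_nonzero_coords_le_lintegral_of_card_le (κ := S) ha hH (Fintype.card_subtype_le _) hGH
    _ = _ := by
      rw [← Finset.mul_sum, ← lintegral_finsetSum _ fun S _ => by fun_prop]
      simp only [← Finset.mul_sum, coordSubspaceWeight_card]
      simp only [ENNReal.ofReal_sum_of_nonneg fun S _ => hface S _, faceWeight]

end LatticeSums

theorem stmt_1_general {ι : Type*} [Fintype ι] [Nonempty ι] {f : ℝ → ℝ≥0∞}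
    (hf : AntitoneOn f (Set.Ioi 0)) {a κ : ℝ} (ha : 0 < a) (hκ : 0 < κ) :
    (∑' p : ι → ℤ, if κ ≤ ‖scaledIntPoint a p‖ then f ‖scaledIntPoint a p‖ else 0) ≤
      ENNReal.ofReal (a⁻¹ ^ Fintype.card ι) *
        ∫⁻ x in {x : EuclideanSpace ℝ ι | max (κ - √(Fintype.card ι) * a) 0 ≤ ‖x‖},
          f ‖x‖ * ENNReal.ofReal (coordSubspaceWeight (Fintype.card ι) (a / ‖x‖)) := by
  set c : ℝ := max (κ - √(Fintype.card ι) * a) 0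
  -- `f` is unconstrained outside `(0, ∞)`; the value `⊤` there keeps the extension antitone.
  let g (r : ℝ) : ℝ≥0∞ := if 0 < r then f r else ⊤
  have hg : Antitone g := fun r s hrs => by
    by_cases hr : 0 < r
    · simpa only [g, hr, hr.trans_le hrs, if_true] using hf hr (hr.trans_le hrs) hrs
    · simp [g, hr]
  let G (s : ℝ) : ℝ≥0∞ := if κ ≤ s then f s else 0
  let H : ℝ → ℝ≥0∞ := (Set.Ici c).indicator g
  have hGH (r s : ℝ) (hr : 0 ≤ r) (hrs : r ≤ s) (hs : s ≤ r + √(Fintype.card ι) * a) :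
      G s ≤ H r := by
    by_cases hκs : κ ≤ s
    · have hcr : r ∈ Set.Ici c := max_le (by linarith) hr
      simpa [G, H, g, hκs, hcr, hκ.trans_le hκs] using hg hrs
    · simp [G, hκs]
  refine (tsum_lattice_le_lintegral_mul_coordSubspaceWeight (G := G) ha (by simp [G, hκ])
    (hg.measurable.indicator measurableSet_Ici) hGH).trans_eq ?_
  rw [← lintegral_indicator (measurableSet_le measurable_const measurable_norm)]
  congr 1
  refine lintegral_congr_ae ?_
  filter_upwards [Measure.ae_ne volume (0 : EuclideanSpace ℝ ι)] with x hx
  by_cases hcx : c ≤ ‖x‖ <;> simp [g, hcx, hx]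

/-- upper bound for a lattice Riemann sum of a nonnegative decreasing
radial function by an integral over `{|p| ≥ [κ − √3(2π/L)]₊}`, in the extended reals. -/
theorem stmt_1 (f : ℝ → ℝ) (hf0 : ∀ x ∈ Set.Ioi (0:ℝ), 0 ≤ f x)
    (hmono : AntitoneOn f (Set.Ioi 0)) (L κ : ℝ) (hL : 0 < L) (hκ : 0 < κ) :
    (∑' p : Fin 3 → ℤ,
      if κ ≤ ‖latticePoint L p‖ then ENNReal.ofReal (f ‖latticePoint L p‖) else 0) ≤
    ENNReal.ofReal ((L / (2 * Real.pi)) ^ 3) *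
      ∫⁻ p in {p : EuclideanSpace ℝ (Fin 3) |
          max (κ - Real.sqrt 3 * (2 * Real.pi / L)) 0 ≤ ‖p‖},
        ENNReal.ofReal (f ‖p‖ *
          (1 + 3 * Real.pi / (L * ‖p‖) + 6 * Real.pi / (L ^ 2 * ‖p‖ ^ 2))) ∂volume := by
  refine (stmt_1_general (ι := Fin 3) (f := fun r => ENNReal.ofReal (f r))
    (fun r hr s hs hrs => ENNReal.ofReal_le_ofReal (hmono hr hs hrs))
    (a := 2 * Real.pi / L) (by positivity) hκ).trans_eq ?_
  have hweight (r : ℝ) : coordSubspaceWeight 3 (2 * π / L / r) =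
      1 + 3 * π / (L * r) + 6 * π / (L ^ 2 * r ^ 2) := by
    rw [coordSubspaceWeight_three]
    field_simp
    ring
  simp only [Fintype.card_fin, Nat.cast_ofNat, inv_div, hweight]
  congr 1
  exact lintegral_congr fun p => (ENNReal.ofReal_mul' (by positivity)).symm
end

section
/- Let β ∈ (0,1] and let μ₀ ≤ 0 satisfy −βμ₀ ≤ c. Then for every integer q ≥ 1 and every δ₁ ∈ (0,1), the sum over lattice points v ∈ 2πℤ³ with β^{−(1−δ₁)/2} ≤ ‖v‖ ≤ β^{−(1+δ₂)/2} of the q-th moment E(N_v^q) of a geometric random variable N_v with ratio e^{−β(‖v‖²−μ₀)} satisfies ∑_v E(N_v^q) ≤ C_q β^{−3/2}(1 + β^{−δ₁(2q−3)/2}). -/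
open Real

/-- The Euclidean norm of the point `2πp ∈ 2πℤ³` for `p ∈ ℤ³`. -/
noncomputable def lnorm3 (p : Fin 3 → ℤ) : ℝ :=
  Real.sqrt (∑ i, ((2 * Real.pi) * (p i : ℝ)) ^ 2)

/-!
A geometric variable `N` with ratio `e^{-x}` has `E(N ^ q) = O(x ^ (-q))`, and since `N` is
integer-valued, `E(N ^ q) ≤ E(N ^ p) = O(x ^ (-p))` for every `p ≥ q ≥ 1`. With `x ≥ β ℓ ^ 2` it
remains to sum `ℓ ^ (-2p)` over points of which at most `K t ^ d` have `0 < ℓ ≤ t`. Dyadic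
decomposition bounds that sum by `O(r ^ (d - 2p))` over `ℓ ≥ r` if `2p > d`, and over `ℓ ≤ r` if
`2p < d`. If `2q > d`, taking `p = q` and `r = β ^ (-(1 - δ) / 2)` produces the term in `δ`; if
`2q < d`, splitting at `r = β ^ (-1 / 2)`, with `p = q` below it and a large `p` above it, gives
`O(β ^ (-d / 2))`.
-/

/-- The `q`-th moment `E(N ^ q)` of the geometric variable `N` on `ℕ` with
`P(N = n) = e^{-xn} (1 - e^{-x})`. The parameter `x` is the rate, so the ratio is `e^{-x}`; this is
a probability distribution only for `0 < x`. -/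
noncomputable def geometricMoment (q : ℕ) (x : ℝ) : ℝ :=
  ∑' n : ℕ, (n : ℝ) ^ q * exp (-x * n) * (1 - exp (-x))

/-- At most `K * t ^ d` points have size in `(0, t]`, the size of `v` being `ℓ v`. This is the only
property of a `d`-dimensional lattice with norm `ℓ` that the moment sums depend on. Finite sets are
used because `Set.ncard` is `0` on infinite sets. -/
def PolynomialGrowth {α : Type*} (ℓ : α → ℝ) (K d : ℝ) : Prop :=
  ∀ ⦃t : ℝ⦄, 0 < t → ∀ s : Finset α, (∀ v ∈ s, 0 < ℓ v ∧ ℓ v ≤ t) → (s.card : ℝ) ≤ K * t ^ d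

section GeometricMoment

variable {p q : ℕ} {x : ℝ}

lemma summable_geometricMoment_terms (q : ℕ) (hx : 0 < x) :
    Summable fun n : ℕ => (n : ℝ) ^ q * exp (-x * n) * (1 - exp (-x)) :=
  (summable_pow_mul_exp_neg_nat_mul q hx).mul_right _

lemma one_sub_exp_neg_nonneg (hx : 0 ≤ x) : 0 ≤ 1 - exp (-x) :=
  sub_nonneg.mpr (exp_le_one_iff.mpr (neg_nonpos.mpr hx))

lemma geometricMoment_nonneg (q : ℕ) (hx : 0 ≤ x) : 0 ≤ geometricMoment q x :=
  tsum_nonneg fun _ => mul_nonneg (by positivity) (one_sub_exp_neg_nonneg hx)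

lemma geometricMoment_mono (hq : 1 ≤ q) (hqp : q ≤ p) (hx : 0 < x) :
    geometricMoment q x ≤ geometricMoment p x := by
  refine (summable_geometricMoment_terms q hx).tsum_le_tsum (fun n => ?_)
    (summable_geometricMoment_terms p hx)
  have hpow : (n : ℝ) ^ q ≤ (n : ℝ) ^ p := by
    rcases n.eq_zero_or_pos with rfl | hn
    · simp only [Nat.cast_zero, zero_pow (Nat.one_le_iff_ne_zero.mp hq)]
      positivity
    · exact pow_le_pow_right₀ (by exact_mod_cast hn) hqp
  have := one_sub_exp_neg_nonneg hx.le
  gcongr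

lemma pow_le_factorial_mul_exp (q : ℕ) (hx : 0 < x) (n : ℕ) :
    (n : ℝ) ^ q ≤ q.factorial * (2 / x) ^ q * exp (x / 2 * n) := by
  have hfact : (q.factorial : ℝ) ≠ 0 := by positivity
  calc (n : ℝ) ^ q
      = q.factorial * (2 / x) ^ q * ((x / 2 * n) ^ q / q.factorial) := by
        rw [mul_pow, div_pow, div_pow]
        field_simp
    _ ≤ q.factorial * (2 / x) ^ q * exp (x / 2 * n) := by
        gcongr
        exact pow_div_factorial_le_exp _ (by positivity) q

lemma geometricMoment_le (q : ℕ) (hx : 0 < x) :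
    geometricMoment q x ≤ 2 * (q.factorial * (2 / x) ^ q) := by
  set D : ℝ := q.factorial * (2 / x) ^ q
  set y := exp (-(x / 2)) with hy
  have hy1 : y < 1 := exp_lt_one_iff.mpr (by linarith)
  have hyy : exp (-x) = y * y := by rw [hy, ← exp_add]; ring_nf
  have hterm (n : ℕ) : (n : ℝ) ^ q * exp (-x * n) ≤ D * y ^ n :=
    calc (n : ℝ) ^ q * exp (-x * n)
        ≤ D * exp (x / 2 * n) * exp (-x * n) := by
          gcongr
          exact pow_le_factorial_mul_exp q hx n
      _ = D * y ^ n := by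
          rw [hy, ← exp_nat_mul, mul_assoc, ← exp_add]
          ring_nf
  have hgeom : HasSum (fun n : ℕ => D * y ^ n * (1 - exp (-x))) (D * (1 - y)⁻¹ * (1 - exp (-x))) :=
    ((hasSum_geometric_of_lt_one (exp_pos _).le hy1).mul_left D).mul_right _
  calc geometricMoment q x
      ≤ D * (1 - y)⁻¹ * (1 - exp (-x)) :=
        hasSum_le (fun n => mul_le_mul_of_nonneg_right (hterm n) (one_sub_exp_neg_nonneg hx.le))
          (summable_geometricMoment_terms q hx).hasSum hgeom
    _ = (1 + y) * D := by
        have : 1 - y ≠ 0 := by linarith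
        rw [hyy]
        field_simp
        ring
    _ ≤ 2 * D := by
        gcongr
        linarith

lemma geometricMoment_le_rpow (hq : 1 ≤ q) (hqp : q ≤ p) {β l y : ℝ} (hβ : 0 < β) (hl : 0 < l)
    (hy : β * l ^ 2 ≤ y) :
    geometricMoment q y ≤ 2 * p.factorial * 2 ^ p * β ^ (-(p : ℝ)) * l ^ (-(2 * p : ℝ)) := by
  have hz : 0 < β * l ^ 2 := by positivity
  have hy0 : 0 < y := hz.trans_le hy
  calc geometricMoment q y
      ≤ geometricMoment p y := geometricMoment_mono hq hqp hy0
    _ ≤ 2 * (p.factorial * (2 / y) ^ p) := geometricMoment_le p hy0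
    _ ≤ 2 * (p.factorial * (2 / (β * l ^ 2)) ^ p) := by gcongr
    _ = 2 * p.factorial * 2 ^ p * β ^ (-(p : ℝ)) * l ^ (-(2 * p : ℝ)) := by
        rw [rpow_neg hβ.le, rpow_neg hl.le, rpow_mul hl.le, rpow_natCast, rpow_natCast, rpow_ofNat,
          div_pow, mul_pow]
        field_simp

lemma sum_geometricMoment_le {α : Type*} {β : ℝ} {ℓ x : α → ℝ} {s : Finset α}
    (hq : 1 ≤ q) (hqp : q ≤ p) (hβ : 0 < β)
    (hs : ∀ v ∈ s, 0 < ℓ v ∧ β * ℓ v ^ 2 ≤ x v) :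
    ∑ v ∈ s, geometricMoment q (x v) ≤
      2 * p.factorial * 2 ^ p * β ^ (-(p : ℝ)) * ∑ v ∈ s, ℓ v ^ (-(2 * p : ℝ)) := by
  rw [Finset.mul_sum]
  exact Finset.sum_le_sum fun v hv =>
    geometricMoment_le_rpow hq hqp hβ (hs v hv).1 (hs v hv).2

end GeometricMoment

lemma rpow_neg_mul_radius_rpow {β : ℝ} (hβ : 0 < β) (p δ d : ℝ) :
    β ^ (-p) * (β ^ (-(1 - δ) / 2)) ^ (d - 2 * p) =
      β ^ (-d / 2) * β ^ (-(δ * (2 * p - d) / 2)) := by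
  rw [← rpow_mul hβ.le, ← rpow_add hβ, ← rpow_add hβ]
  ring_nf

lemma sum_le_of_fiberwise_le_geometric {α : Type*} {s : Finset α} {f : α → ℝ} {A ρ : ℝ}
    (k : α → ℕ) (hA : 0 ≤ A) (hρ : 0 ≤ ρ) (hρ1 : ρ < 1)
    (h : ∀ j, ∑ v ∈ s with k v = j, f v ≤ A * ρ ^ j) : ∑ v ∈ s, f v ≤ A * (1 - ρ)⁻¹ :=
  calc ∑ v ∈ s, f v
      = ∑ j ∈ s.image k, ∑ v ∈ s with k v = j, f v :=
        (Finset.sum_fiberwise_of_maps_to (fun _ => Finset.mem_image_of_mem k) f).symm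
    _ ≤ ∑ j ∈ s.image k, A * ρ ^ j := Finset.sum_le_sum fun j _ => h j
    _ ≤ A * (1 - ρ)⁻¹ :=
        sum_le_hasSum _ (fun _ _ => by positivity)
          ((hasSum_geometric_of_lt_one hρ hρ1).mul_left A)

namespace PolynomialGrowth

variable {α : Type*} {ℓ : α → ℝ} {K d m : ℝ} {p q : ℕ}

lemma const_nonneg (h : PolynomialGrowth ℓ K d) : 0 ≤ K := by
  simpa using h one_pos ∅

lemma sum_rpow_neg_le (h : PolynomialGrowth ℓ K d) (hm : 0 ≤ m) {a b : ℝ} (ha : 0 < a)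
    (hb : 0 < b) {s : Finset α} (hs : ∀ v ∈ s, a ≤ ℓ v ∧ ℓ v ≤ b) :
    ∑ v ∈ s, ℓ v ^ (-m) ≤ K * b ^ d * a ^ (-m) :=
  calc ∑ v ∈ s, ℓ v ^ (-m)
      ≤ s.card • a ^ (-m) :=
        Finset.sum_le_card_nsmul _ _ _ fun v hv =>
          rpow_le_rpow_of_nonpos ha (hs v hv).1 (neg_nonpos.mpr hm)
    _ ≤ K * b ^ d * a ^ (-m) := by
        rw [nsmul_eq_mul]
        gcongr
        exact h hb s fun v hv => ⟨ha.trans_le (hs v hv).1, (hs v hv).2⟩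

lemma sum_rpow_neg_le_of_geometric_scales (h : PolynomialGrowth ℓ K d) (hm : 0 ≤ m)
    {a b c r : ℝ} (ha : 0 < a) (hb : 0 < b) (hc : 0 < c) (hr : 0 < r) (hcdm : c ^ (d - m) < 1)
    {s : Finset α} (k : α → ℕ)
    (hk : ∀ v ∈ s, a * (c ^ k v * r) ≤ ℓ v ∧ ℓ v ≤ b * (c ^ k v * r)) :
    ∑ v ∈ s, ℓ v ^ (-m) ≤ K * b ^ d * a ^ (-m) * (1 - c ^ (d - m))⁻¹ * r ^ (d - m) := by
  have hK := h.const_nonneg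
  have hblock (j : ℕ) : ∑ v ∈ s with k v = j, ℓ v ^ (-m) ≤
      K * b ^ d * a ^ (-m) * r ^ (d - m) * (c ^ (d - m)) ^ j :=
    calc ∑ v ∈ s with k v = j, ℓ v ^ (-m)
        ≤ K * (b * (c ^ j * r)) ^ d * (a * (c ^ j * r)) ^ (-m) := by
          refine h.sum_rpow_neg_le hm (by positivity) (by positivity) fun v hv => ?_
          obtain ⟨hvs, rfl⟩ := Finset.mem_filter.mp hv
          exact hk v hvs
      _ = K * b ^ d * a ^ (-m) * (c ^ j * r) ^ (d - m) := by
          rw [mul_rpow hb.le (by positivity), mul_rpow ha.le (by positivity), sub_eq_add_neg,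
            rpow_add (by positivity)]
          ring
      _ = K * b ^ d * a ^ (-m) * r ^ (d - m) * (c ^ (d - m)) ^ j := by
          rw [mul_rpow (by positivity) hr.le, rpow_pow_comm hc.le]
          ring
  exact (sum_le_of_fiberwise_le_geometric k (by positivity) (by positivity) hcdm
    hblock).trans_eq (by ring)

lemma exists_sum_rpow_neg_le_of_ge (h : PolynomialGrowth ℓ K d) (hm : 0 ≤ m) (hdm : d < m) :
    ∃ C ≥ 0, ∀ r > 0, ∀ s : Finset α, (∀ v ∈ s, r ≤ ℓ v) →
      ∑ v ∈ s, ℓ v ^ (-m) ≤ C * r ^ (d - m) := by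
  have hK := h.const_nonneg
  have hratio : (2 : ℝ) ^ (d - m) < 1 := rpow_lt_one_of_one_lt_of_neg one_lt_two (by linarith)
  refine ⟨K * 2 ^ d * 1 ^ (-m) * (1 - 2 ^ (d - m))⁻¹,
    mul_nonneg (by positivity) (inv_nonneg.mpr (sub_nonneg.mpr hratio.le)), fun r hr s hs => ?_⟩
  choose! k hk using fun v (hv : v ∈ s) =>
    exists_nat_pow_near ((one_le_div hr).mpr (hs v hv)) one_lt_two
  refine h.sum_rpow_neg_le_of_geometric_scales hm one_pos two_pos two_pos hr hratio k
    fun v hv => ?_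
  obtain ⟨hlow, hupp⟩ := hk v hv
  rw [le_div_iff₀ hr] at hlow
  rw [div_lt_iff₀ hr, pow_succ'] at hupp
  constructor <;> linarith

lemma exists_sum_rpow_neg_le_of_le (h : PolynomialGrowth ℓ K d) (hm : 0 ≤ m) (hmd : m < d) :
    ∃ C ≥ 0, ∀ r > 0, ∀ s : Finset α, (∀ v ∈ s, 0 < ℓ v ∧ ℓ v ≤ r) →
      ∑ v ∈ s, ℓ v ^ (-m) ≤ C * r ^ (d - m) := by
  have hK := h.const_nonneg
  have hratio : (2⁻¹ : ℝ) ^ (d - m) < 1 :=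
    rpow_lt_one (by norm_num) (by norm_num) (sub_pos.mpr hmd)
  refine ⟨K * 1 ^ d * 2⁻¹ ^ (-m) * (1 - 2⁻¹ ^ (d - m))⁻¹,
    mul_nonneg (by positivity) (inv_nonneg.mpr (sub_nonneg.mpr hratio.le)), fun r hr s hs => ?_⟩
  choose! k hk using fun v (hv : v ∈ s) =>
    exists_nat_pow_near ((one_le_div (hs v hv).1).mpr (hs v hv).2) one_lt_two
  refine h.sum_rpow_neg_le_of_geometric_scales hm (by norm_num) one_pos (by norm_num) hr hratio k
    fun v hv => ?_
  have hv0 := (hs v hv).1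
  obtain ⟨hlow, hupp⟩ := hk v hv
  rw [le_div_iff₀ hv0] at hlow
  rw [div_lt_iff₀ hv0] at hupp
  rw [one_mul, ← mul_assoc, ← pow_succ', inv_pow, inv_pow, inv_mul_le_iff₀ (by positivity),
    le_inv_mul_iff₀ (by positivity)]
  exact ⟨hupp.le, hlow⟩

lemma exists_sum_geometricMoment_le_of_ge (h : PolynomialGrowth ℓ K d)
    (hq : 1 ≤ q) (hqp : q ≤ p) (hd : d < 2 * p) :
    ∃ C ≥ 0, ∀ β > 0, ∀ r > 0, ∀ (s : Finset α) (x : α → ℝ),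
      (∀ v ∈ s, r ≤ ℓ v ∧ β * ℓ v ^ 2 ≤ x v) →
        ∑ v ∈ s, geometricMoment q (x v) ≤ C * (β ^ (-(p : ℝ)) * r ^ (d - 2 * p)) := by
  obtain ⟨C, hC, hsum⟩ := h.exists_sum_rpow_neg_le_of_ge (by positivity) hd
  refine ⟨2 * p.factorial * 2 ^ p * C, by positivity, fun β hβ r hr s x hs => ?_⟩
  refine (sum_geometricMoment_le hq hqp hβ fun v hv =>
    ⟨hr.trans_le (hs v hv).1, (hs v hv).2⟩).trans ?_
  grw [hsum r hr s fun v hv => (hs v hv).1]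
  exact le_of_eq (by ring)

lemma exists_sum_geometricMoment_le_of_le (h : PolynomialGrowth ℓ K d)
    (hq : 1 ≤ q) (hd : 2 * q < d) :
    ∃ C ≥ 0, ∀ β > 0, ∀ r > 0, ∀ (s : Finset α) (x : α → ℝ),
      (∀ v ∈ s, (0 < ℓ v ∧ ℓ v ≤ r) ∧ β * ℓ v ^ 2 ≤ x v) →
        ∑ v ∈ s, geometricMoment q (x v) ≤ C * (β ^ (-(q : ℝ)) * r ^ (d - 2 * q)) := by
  obtain ⟨C, hC, hsum⟩ := h.exists_sum_rpow_neg_le_of_le (by positivity) hd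
  refine ⟨2 * q.factorial * 2 ^ q * C, by positivity, fun β hβ r hr s x hs => ?_⟩
  refine (sum_geometricMoment_le hq le_rfl hβ fun v hv => ⟨(hs v hv).1.1, (hs v hv).2⟩).trans ?_
  grw [hsum r hr s fun v hv => (hs v hv).1]
  exact le_of_eq (by ring)

lemma exists_sum_geometricMoment_le (h : PolynomialGrowth ℓ K d)
    (hq : 1 ≤ q) (hd : 2 * q < d) :
    ∃ C ≥ 0, ∀ β > 0, ∀ (s : Finset α) (x : α → ℝ),
      (∀ v ∈ s, 0 < ℓ v ∧ β * ℓ v ^ 2 ≤ x v) →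
        ∑ v ∈ s, geometricMoment q (x v) ≤ C * β ^ (-d / 2) := by
  obtain ⟨p, hp⟩ := exists_nat_gt d
  have hqp : q ≤ p := by
    have : (q : ℝ) < p := by linarith [q.cast_nonneg (α := ℝ)]
    exact_mod_cast this.le
  obtain ⟨C₁, hC₁, hsmall⟩ := h.exists_sum_geometricMoment_le_of_le hq hd
  obtain ⟨C₂, hC₂, hlarge⟩ := h.exists_sum_geometricMoment_le_of_ge hq hqp
    (by linarith [p.cast_nonneg (α := ℝ)])
  refine ⟨C₁ + C₂, by positivity, fun β hβ s x hs => ?_⟩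
  -- Written as the annulus radius with `δ = 0`, so that `rpow_neg_mul_radius_rpow` applies.
  set r := β ^ (-(1 - 0 : ℝ) / 2) with hr
  have hscale (n : ℕ) : β ^ (-(n : ℝ)) * r ^ (d - 2 * n) = β ^ (-d / 2) := by
    rw [hr, rpow_neg_mul_radius_rpow hβ]
    simp only [zero_mul, zero_div, neg_zero, rpow_zero, mul_one]
  have hr0 : 0 < r := rpow_pos_of_pos hβ _
  rw [← Finset.sum_filter_add_sum_filter_not s fun v => ℓ v ≤ r, add_mul]
  refine add_le_add ?_ ?_
  · rw [← hscale q]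
    refine hsmall β hβ r hr0 _ x fun v hv => ?_
    obtain ⟨hvs, hvr⟩ := Finset.mem_filter.mp hv
    exact ⟨⟨(hs v hvs).1, hvr⟩, (hs v hvs).2⟩
  · rw [← hscale p]
    refine hlarge β hβ r hr0 _ x fun v hv => ?_
    obtain ⟨hvs, hvr⟩ := Finset.mem_filter.mp hv
    exact ⟨(not_le.mp hvr).le, (hs v hvs).2⟩

lemma exists_sum_geometricMoment_le_of_rpow_le (h : PolynomialGrowth ℓ K d)
    (hq : 1 ≤ q) (hd : 2 * q ≠ d) :
    ∃ C > 0, ∀ β > 0, ∀ (δ : ℝ) (s : Finset α) (x : α → ℝ),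
      (∀ v ∈ s, β ^ (-(1 - δ) / 2) ≤ ℓ v ∧ β * ℓ v ^ 2 ≤ x v) →
        ∑ v ∈ s, geometricMoment q (x v) ≤
          C * β ^ (-d / 2) * (1 + β ^ (-(δ * (2 * q - d) / 2))) := by
  rcases lt_or_gt_of_ne hd with hd | hd
  · obtain ⟨C, hC, hsum⟩ := h.exists_sum_geometricMoment_le hq hd
    refine ⟨C + 1, by positivity, fun β hβ δ s x hs => ?_⟩
    have hR : 0 < β ^ (-(1 - δ) / 2) := rpow_pos_of_pos hβ _
    calc ∑ v ∈ s, geometricMoment q (x v)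
        ≤ C * β ^ (-d / 2) * 1 := by
          rw [mul_one]
          exact hsum β hβ s x fun v hv => ⟨hR.trans_le (hs v hv).1, (hs v hv).2⟩
      _ ≤ (C + 1) * β ^ (-d / 2) * (1 + β ^ (-(δ * (2 * q - d) / 2))) := by
          gcongr
          · linarith
          · linarith [rpow_pos_of_pos hβ (-(δ * (2 * q - d) / 2))]
  · obtain ⟨C, hC, hsum⟩ := h.exists_sum_geometricMoment_le_of_ge hq le_rfl hd
    refine ⟨C + 1, by positivity, fun β hβ δ s x hs => ?_⟩
    calc ∑ v ∈ s, geometricMoment q (x v)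
        ≤ C * β ^ (-d / 2) * β ^ (-(δ * (2 * q - d) / 2)) := by
          rw [mul_assoc, ← rpow_neg_mul_radius_rpow hβ]
          exact hsum β hβ _ (rpow_pos_of_pos hβ _) s x hs
      _ ≤ (C + 1) * β ^ (-d / 2) * (1 + β ^ (-(δ * (2 * q - d) / 2))) := by
          gcongr <;> linarith

end PolynomialGrowth

section IntegerLattice

variable {ι : Type*} [Fintype ι]

lemma one_le_norm_of_ne_zero {v : ι → ℤ} (hv : v ≠ 0) : 1 ≤ ‖v‖ := by
  obtain ⟨i, hi⟩ := Function.ne_iff.mp hv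
  calc (1 : ℝ) ≤ ‖v i‖ := by
        rw [Int.norm_eq_abs]
        exact_mod_cast Int.one_le_abs hi
    _ ≤ ‖v‖ := norm_le_pi_norm v i

lemma card_le_of_norm_le {t : ℝ} (ht : 0 ≤ t) {s : Finset (ι → ℤ)}
    (hs : ∀ v ∈ s, v ≠ 0 ∧ ‖v‖ ≤ t) : (s.card : ℝ) ≤ (3 * t) ^ Fintype.card ι := by
  classical
  rcases s.eq_empty_or_nonempty with rfl | ⟨v₀, hv₀⟩
  · simpa only [Finset.card_empty, Nat.cast_zero] using by positivity
  have ht1 : 1 ≤ t := (one_le_norm_of_ne_zero (hs v₀ hv₀).1).trans (hs v₀ hv₀).2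
  have hsub : s ⊆ Fintype.piFinset fun _ => Finset.Icc (-(⌊t⌋₊ : ℤ)) ⌊t⌋₊ := fun v hv => by
    refine Fintype.mem_piFinset.mpr fun i => ?_
    have hi : ((v i).natAbs : ℝ) ≤ t := by
      rw [Nat.cast_natAbs, Int.cast_abs, ← Int.norm_eq_abs]
      exact (norm_le_pi_norm v i).trans (hs v hv).2
    have := Nat.le_floor hi
    exact Finset.mem_Icc.mpr (by omega)
  have hcard : s.card ≤ (2 * ⌊t⌋₊ + 1) ^ Fintype.card ι := by
    refine (Finset.card_le_card hsub).trans_eq ?_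
    rw [Fintype.card_piFinset, Finset.prod_const, Finset.card_univ, Int.card_Icc]
    congr 1
    omega
  calc (s.card : ℝ) ≤ (2 * ⌊t⌋₊ + 1) ^ Fintype.card ι := by exact_mod_cast hcard
    _ ≤ (3 * t) ^ Fintype.card ι := by
        gcongr
        linarith [Nat.floor_le ht]

lemma norm_le_lnorm3 (v : Fin 3 → ℤ) : ‖v‖ ≤ lnorm3 v := by
  refine (pi_norm_le_iff_of_nonneg (sqrt_nonneg _)).mpr fun i => le_sqrt_of_sq_le ?_
  calc ‖v i‖ ^ 2 = 1 * (v i : ℝ) ^ 2 := by rw [Int.norm_eq_abs, sq_abs, one_mul]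
    _ ≤ (2 * π) ^ 2 * (v i : ℝ) ^ 2 := by
        gcongr
        exact one_le_pow₀ (by linarith [pi_gt_three])
    _ = (2 * π * v i) ^ 2 := (mul_pow _ _ _).symm
    _ ≤ ∑ j, (2 * π * (v j : ℝ)) ^ 2 :=
        Finset.single_le_sum (f := fun j => (2 * π * (v j : ℝ)) ^ 2)
          (fun _ _ => sq_nonneg _) (Finset.mem_univ i)

lemma polynomialGrowth_lnorm3 : PolynomialGrowth lnorm3 27 3 := fun t ht s hs => by
  have hcard : (s.card : ℝ) ≤ (3 * t) ^ Fintype.card (Fin 3) :=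
    card_le_of_norm_le ht.le fun v hv =>
      ⟨fun hv0 => by simpa [hv0, lnorm3] using (hs v hv).1,
        (norm_le_lnorm3 v).trans (hs v hv).2⟩
  rw [Fintype.card_fin, mul_pow] at hcard
  rw [rpow_ofNat]
  linarith

end IntegerLattice

theorem stmt_18_general {α : Type*} {ℓ : α → ℝ} {K d : ℝ} (hℓ : PolynomialGrowth ℓ K d) {q : ℕ}
    (hq : 1 ≤ q) (hd : 2 * q ≠ d) :
    ∃ C > 0, ∀ β μ₀ δ : ℝ, 0 < β → μ₀ ≤ 0 → ∀ (P : α → Prop) [DecidablePred P],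
      (∀ v, P v → β ^ (-(1 - δ) / 2) ≤ ℓ v) →
        (Summable fun v => if P v then geometricMoment q (β * (ℓ v ^ 2 - μ₀)) else 0) ∧
        ∑' v, (if P v then geometricMoment q (β * (ℓ v ^ 2 - μ₀)) else 0) ≤
          C * β ^ (-d / 2) * (1 + β ^ (-(δ * (2 * q - d) / 2))) := by
  obtain ⟨C, hC, hsum⟩ := hℓ.exists_sum_geometricMoment_le_of_rpow_le hq hd
  refine ⟨C, hC, fun β μ₀ δ hβ hμ P _ hP => ?_⟩
  have hrate (v : α) : β * ℓ v ^ 2 ≤ β * (ℓ v ^ 2 - μ₀) := by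
    gcongr
    linarith
  have hnonneg (v : α) : 0 ≤ if P v then geometricMoment q (β * (ℓ v ^ 2 - μ₀)) else 0 :=
    ite_nonneg (geometricMoment_nonneg q ((by positivity : 0 ≤ β * ℓ v ^ 2).trans (hrate v))) le_rfl
  have hpartial (s : Finset α) :
      ∑ v ∈ s, (if P v then geometricMoment q (β * (ℓ v ^ 2 - μ₀)) else 0) ≤
        C * β ^ (-d / 2) * (1 + β ^ (-(δ * (2 * q - d) / 2))) := by
    rw [← Finset.sum_filter]
    exact hsum β hβ δ _ _ fun v hv => ⟨hP v (Finset.mem_filter.mp hv).2, hrate v⟩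
  exact ⟨summable_of_sum_le hnonneg hpartial, Real.tsum_le_of_sum_le hnonneg hpartial⟩

/-- for `q ≥ 1`, the sum over lattice points `v ∈ 2πℤ³` in the annulus
`β^{−(1−δ₁)/2} ≤ ‖v‖ ≤ β^{−(1+δ₂)/2}` of the `q`-th moment of a geometric random
variable with ratio `e^{−β(‖v‖²−μ₀)}` is bounded by
`C β^{−3/2}(1 + β^{−δ₁(2q−3)/2})`. -/
theorem stmt_18 (q : ℕ) (hq : 1 ≤ q) (δ₁ δ₂ c : ℝ) (h1 : 0 < δ₁) (h1' : δ₁ < 1)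
    (h2 : 0 < δ₂) (hc : 0 < c) :
    ∃ C > (0:ℝ), ∀ β μ₀ : ℝ, 0 < β → β ≤ 1 → μ₀ ≤ 0 → -(β * μ₀) ≤ c →
      (∑' v : Fin 3 → ℤ,
        if β ^ (-(1 - δ₁) / 2) ≤ lnorm3 v ∧ lnorm3 v ≤ β ^ (-(1 + δ₂) / 2) then
          ∑' n : ℕ, (n : ℝ) ^ q * Real.exp (-β * (lnorm3 v ^ 2 - μ₀) * n) *
            (1 - Real.exp (-β * (lnorm3 v ^ 2 - μ₀)))
        else 0) ≤
      C * β ^ (-(3:ℝ) / 2) * (1 + β ^ (-(δ₁ * (2 * (q:ℝ) - 3) / 2))) := by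
  obtain ⟨C, hC, h⟩ := stmt_18_general polynomialGrowth_lnorm3 hq (by norm_cast; omega)
  refine ⟨C, hC, fun β μ₀ hβ _ hμ _ => ?_⟩
  simpa only [geometricMoment, neg_mul] using (h β μ₀ δ₁ hβ hμ _ fun _ hv => hv.1).2
end
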